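/- Let X and Y be two-dimensional normed spaces and τ : S_X → S_Y a surjective isometry. If the set of points of S_X where the norm of X fails to be differentiable is finite and has more than three elements, then τ is linear. -/

import Mathlib

open Set Filter Topology

theorem tendsto_mul_const_nhdsGT_zero {c : ℝ} (hc : 0 < c) :
    Tendsto (fun t : ℝ => t * c) (𝓝[>] 0) (𝓝[>] 0) := by
  refine tendsto_nhdsWithin_iff.2 ⟨?_, ?_⟩
  · have : Tendsto (fun t : ℝ => t * c) (𝓝 0) (𝓝 (0 * c)) := tendsto_id.mul_const c
    simpa using this.mono_left nhdsWithin_le_nhds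
  · filter_upwards [self_mem_nhdsWithin] with t (ht : 0 < t)
    exact mul_pos ht hc

section NormDirDeriv

variable {E : Type*} [NormedAddCommGroup E] [NormedSpace ℝ E]

/-- The one-sided derivative of the norm at `p` in the direction `v`. -/
noncomputable def normDirDeriv (p v : E) : ℝ :=
  derivWithin (fun t : ℝ => ‖p + t • v‖) (Ioi 0) 0

theorem convexOn_norm_add_smul (p v : E) (s : Set ℝ) (hs : Convex ℝ s) :
    ConvexOn ℝ s (fun t : ℝ => ‖p + t • v‖) := by
  refine ⟨hs, fun x _ y _ a b ha hb hab => ?_⟩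
  have h : p + (a • x + b • y) • v = a • (p + x • v) + b • (p + y • v) := by
    obtain rfl : b = 1 - a := by linarith
    module
  calc ‖p + (a • x + b • y) • v‖ = ‖a • (p + x • v) + b • (p + y • v)‖ := by rw [h]
    _ ≤ ‖a • (p + x • v)‖ + ‖b • (p + y • v)‖ := norm_add_le _ _
    _ = a • ‖p + x • v‖ + b • ‖p + y • v‖ := by
      rw [norm_smul, norm_smul, Real.norm_of_nonneg ha, Real.norm_of_nonneg hb]
      rfl

theorem tendsto_normDirDeriv (p v : E) :
    Tendsto (fun t : ℝ => (‖p + t • v‖ - ‖p‖) / t) (𝓝[>] 0) (𝓝 (normDirDeriv p v)) := by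
  have h := (convexOn_norm_add_smul p v univ
    convex_univ).hasDerivWithinAt_rightDeriv_of_mem_interior (x := 0) (by simp)
  rw [hasDerivWithinAt_iff_tendsto_slope' (by simp)] at h
  refine h.congr fun t => ?_
  simp [slope_def_field]

/-- Along any filter, difference quotients of the norm with converging directions converge to the
directional derivative. -/
theorem tendsto_normDirDeriv_of_tendsto {ι : Type*} {l : Filter ι} {h : ι → ℝ} {q : ι → E} {p v : E}
    (hh : Tendsto h l (𝓝[>] 0)) (hq : Tendsto q l (𝓝 v)) :
    Tendsto (fun i => (‖p + h i • q i‖ - ‖p‖) / h i) l (𝓝 (normDirDeriv p v)) := by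
  have h1 := (tendsto_normDirDeriv p v).comp hh
  have h2 : Tendsto (fun i => ‖q i - v‖) l (𝓝 0) := tendsto_iff_norm_sub_tendsto_zero.1 hq
  have hpos : ∀ᶠ i in l, 0 < h i := hh self_mem_nhdsWithin
  have h3 : Tendsto (fun i => (‖p + h i • q i‖ - ‖p‖) / h i - (‖p + h i • v‖ - ‖p‖) / h i) l
      (𝓝 0) := by
    refine squeeze_zero_norm' ?_ h2
    filter_upwards [hpos] with i hi
    rw [← sub_div, Real.norm_eq_abs, abs_div, abs_of_pos hi, div_le_iff₀ hi]
    calc |‖p + h i • q i‖ - ‖p‖ - (‖p + h i • v‖ - ‖p‖)| = |‖p + h i • q i‖ - ‖p + h i • v‖| := by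
          congr 1; ring
      _ ≤ ‖(p + h i • q i) - (p + h i • v)‖ := abs_norm_sub_norm_le _ _
      _ = ‖h i • (q i - v)‖ := by congr 1; module
      _ = ‖q i - v‖ * h i := by rw [norm_smul, Real.norm_of_nonneg hi.le, mul_comm]
  simpa using h3.add h1

theorem normDirDeriv_le_add (p v w : E) :
    normDirDeriv p v ≤ normDirDeriv p w + ‖v - w‖ := by
  refine le_of_tendsto_of_tendsto (tendsto_normDirDeriv p v)
    ((tendsto_normDirDeriv p w).add_const ‖v - w‖) ?_
  filter_upwards [self_mem_nhdsWithin] with t (ht : 0 < t)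
  rw [div_add' _ _ _ ht.ne', div_le_div_iff_of_pos_right ht]
  have : p + t • v = (p + t • w) + t • (v - w) := by module
  have h := norm_add_le (p + t • w) (t • (v - w))
  rw [← this, norm_smul, Real.norm_of_nonneg ht.le] at h
  linarith

theorem normDirDeriv_zero (p : E) : normDirDeriv p 0 = 0 := by
  refine tendsto_nhds_unique (tendsto_normDirDeriv p 0) ?_
  simp

theorem normDirDeriv_le_norm (p v : E) : normDirDeriv p v ≤ ‖v‖ := by
  simpa [normDirDeriv_zero] using normDirDeriv_le_add p v 0

theorem normDirDeriv_add_le (p v w : E) :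
    normDirDeriv p (v + w) ≤ normDirDeriv p v + normDirDeriv p w := by
  have hh := tendsto_mul_const_nhdsGT_zero (half_pos one_pos)
  refine le_of_tendsto_of_tendsto ((tendsto_normDirDeriv p (v + w)).comp hh)
    ((tendsto_normDirDeriv p v).add (tendsto_normDirDeriv p w)) ?_
  filter_upwards [self_mem_nhdsWithin] with t (ht : 0 < t)
  simp only [Function.comp]
  rw [← add_div, div_le_div_iff₀ (by positivity) ht]
  have : (2 : ℝ) • (p + (t * (1 / 2)) • (v + w)) = (p + t • v) + (p + t • w) := by module
  have h := norm_add_le (p + t • v) (p + t • w)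
  rw [← this, norm_smul] at h
  rw [Real.norm_ofNat] at h
  nlinarith [mul_le_mul_of_nonneg_right h ht.le]

theorem normDirDeriv_smul {c : ℝ} (hc : 0 ≤ c) (p v : E) :
    normDirDeriv p (c • v) = c * normDirDeriv p v := by
  rcases hc.eq_or_lt with rfl | hc
  · simp [normDirDeriv_zero]
  have hh := tendsto_mul_const_nhdsGT_zero hc
  refine tendsto_nhds_unique (tendsto_normDirDeriv p (c • v)) ?_
  refine (((tendsto_normDirDeriv p v).comp hh).const_mul c).congr fun t => ?_
  simp only [Function.comp, smul_smul]
  field_simp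

theorem normDirDeriv_smul_left {c : ℝ} (hc : 0 < c) (p v : E) :
    normDirDeriv (c • p) v = normDirDeriv p v := by
  have hh := tendsto_mul_const_nhdsGT_zero hc
  refine tendsto_nhds_unique ((tendsto_normDirDeriv (c • p) v).comp hh) ?_
  refine (tendsto_normDirDeriv p v).congr fun t => ?_
  have : c • p + (t * c) • v = c • (p + t • v) := by module
  simp only [Function.comp, this, norm_smul, Real.norm_of_nonneg hc.le]
  field_simp

theorem normDirDeriv_add_smul_self (p v : E) (c : ℝ) :
    normDirDeriv p (v + c • p) = normDirDeriv p v + c * ‖p‖ := by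
  have key : ∀ (v : E) (c : ℝ), normDirDeriv p (v + c • p) ≤ normDirDeriv p v + c * ‖p‖ := by
    intro v c
    have hc1 : Tendsto (fun t : ℝ => 1 + t * c) (𝓝[>] 0) (𝓝 1) := by
      have : Tendsto (fun t : ℝ => 1 + t * c) (𝓝 0) (𝓝 (1 + 0 * c)) :=
        (tendsto_id.mul_const c).const_add 1
      simpa using this.mono_left nhdsWithin_le_nhds
    have hq : Tendsto (fun t : ℝ => (1 + t * c)⁻¹ • v) (𝓝[>] 0) (𝓝 v) := by
      simpa using (hc1.inv₀ one_ne_zero).smul_const v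
    have h := (tendsto_normDirDeriv_of_tendsto (p := p) tendsto_id hq)
    have h2 := (hc1.mul h).add_const (c * ‖p‖)
    rw [one_mul] at h2
    refine le_of_tendsto_of_tendsto (tendsto_normDirDeriv p (v + c • p)) h2 ?_
    filter_upwards [self_mem_nhdsWithin, hc1.eventually_const_lt one_pos] with t (ht : 0 < t) h1
    have : p + t • (v + c • p) = (1 + t * c) • (p + t • ((1 + t * c)⁻¹ • v)) := by
      rw [smul_add _ p, smul_comm t (1 + t * c)⁻¹, smul_inv_smul₀ h1.ne']; module
    rw [this, norm_smul, Real.norm_of_nonneg h1.le]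
    apply le_of_eq
    simp only [id]
    field_simp
    ring
  refine le_antisymm (key v c) ?_
  have := key (v + c • p) (-c)
  simp only [add_assoc, ← add_smul, add_neg_cancel, zero_smul, add_zero] at this
  linarith

theorem normDirDeriv_self (p : E) : normDirDeriv p p = ‖p‖ := by
  have := normDirDeriv_add_smul_self p 0 1
  simpa [normDirDeriv_zero] using this

theorem normDirDeriv_neg_self (p : E) : normDirDeriv p (-p) = -‖p‖ := by
  have := normDirDeriv_add_smul_self p 0 (-1)
  simpa [normDirDeriv_zero] using this

theorem normDirDeriv_add_neg_nonneg (p v : E) :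
    0 ≤ normDirDeriv p v + normDirDeriv p (-v) := by
  have := normDirDeriv_add_le p v (-v)
  rwa [add_neg_cancel, normDirDeriv_zero] at this

theorem normDirDeriv_neg_left (p v : E) : normDirDeriv (-p) (-v) = normDirDeriv p v := by
  refine tendsto_nhds_unique (tendsto_normDirDeriv (-p) (-v)) ?_
  refine (tendsto_normDirDeriv p v).congr fun t => ?_
  rw [smul_neg, ← neg_add, norm_neg, norm_neg]

/-- If all one-sided derivatives of the norm at `p` are two-sided, the norm is differentiable. -/
theorem differentiableAt_norm_of_normDirDeriv [FiniteDimensional ℝ E] {p : E}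
    (h : ∀ v, normDirDeriv p v + normDirDeriv p (-v) = 0) :
    DifferentiableAt ℝ (fun z : E => ‖z‖) p := by
  have hneg : ∀ v, normDirDeriv p (-v) = -normDirDeriv p v := fun v => by linarith [h v]
  let L₀ : E →ₗ[ℝ] ℝ :=
    { toFun := normDirDeriv p
      map_add' := fun v w => by
        refine le_antisymm (normDirDeriv_add_le p v w) ?_
        have := normDirDeriv_add_le p (v + w) (-w)
        rw [add_neg_cancel_right, hneg] at this
        linarith
      map_smul' := fun c v => by
        rcases le_total 0 c with hc | hc
        · exact normDirDeriv_smul hc p v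
        · have := normDirDeriv_smul (neg_nonneg.2 hc) p (-v)
          rw [smul_neg, neg_smul, neg_neg, hneg] at this
          simpa using this }
  let L : E →L[ℝ] ℝ := LinearMap.toContinuousLinearMap L₀
  have hL : ∀ v, L v = normDirDeriv p v := fun v => rfl
  borelize E
  refine (LipschitzWith.hasFDerivAt_of_hasLineDerivAt_of_closure (C := 1) (s := univ) (L := L)
    lipschitzWith_one_norm (by simp) fun v _ => ?_).differentiableAt
  unfold HasLineDerivAt
  rw [hasDerivAt_iff_tendsto_slope, ← Iio_union_Ioi, nhdsWithin_union, tendsto_sup]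
  constructor
  · have hh : Tendsto (fun t : ℝ => -t) (𝓝[<] 0) (𝓝[>] 0) := by
      have := tendsto_neg_nhdsLT (a := (0 : ℝ))
      simpa using this
    have h1 := ((tendsto_normDirDeriv p (-v)).comp hh).neg
    rw [hneg, neg_neg] at h1
    refine h1.congr fun t => ?_
    simp only [Function.comp, slope_def_field]
    simp [div_neg]
  · refine (tendsto_normDirDeriv p v).congr fun t => ?_
    simp [slope_def_field]

end NormDirDeriv

theorem ConvexOn.countable_not_differentiableAt {S : Set ℝ} {f : ℝ → ℝ} (hS : IsOpen S)
    (hf : ConvexOn ℝ S f) : {x ∈ S | ¬ DifferentiableAt ℝ f x}.Countable := by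
  have hmono := hf.monotoneOn_rightDeriv
  rw [hS.interior_eq] at hmono
  refine hmono.countable_not_continuousWithinAt.mono ?_
  rintro x ⟨hx, hnd⟩
  refine ⟨hx, fun hc => hnd ?_⟩
  have hxi : x ∈ interior S := by rwa [hS.interior_eq]
  have hl := hf.hasDerivWithinAt_leftDeriv_of_mem_interior hxi
  have hr := hf.hasDerivWithinAt_rightDeriv_of_mem_interior hxi
  have hle : derivWithin f (Ioi x) x ≤ derivWithin f (Iio x) x := by
    have hc' : Tendsto (fun y => derivWithin f (Ioi y) y) (𝓝[<] x)
        (𝓝 (derivWithin f (Ioi x) x)) :=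
      (hc.continuousAt (hS.mem_nhds hx)).tendsto.mono_left nhdsWithin_le_nhds
    refine le_of_tendsto hc' ?_
    filter_upwards [self_mem_nhdsWithin, nhdsWithin_le_nhds (hS.mem_nhds hx)] with y hyx hy
    exact (hf.rightDeriv_le_slope_of_mem_interior (by rwa [hS.interior_eq]) hx hyx).trans
      (hf.slope_le_leftDeriv_of_mem_interior hy hxi hyx)
  have heq := le_antisymm hle (hf.leftDeriv_le_rightDeriv_of_mem_interior hxi)
  rw [heq] at hr
  have h := hl.union hr
  rw [hasDerivWithinAt_iff_tendsto_slope] at h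
  refine HasDerivAt.differentiableAt (f' := derivWithin f (Iio x) x)
    (hasDerivAt_iff_tendsto_slope.2 ?_)
  rwa [Iio_union_Ioi, sdiff_eq_left.2 (by simp)] at h

section Plane

variable {E : Type*} [NormedAddCommGroup E] [NormedSpace ℝ E]

theorem norm_combo_lt_one {x y : E} (hx : ‖x‖ < 1) (hy : ‖y‖ ≤ 1) {t : ℝ} (ht0 : 0 ≤ t)
    (ht1 : t < 1) : ‖(1 - t) • x + t • y‖ < 1 := by
  refine (norm_add_le _ _).trans_lt ?_
  rw [norm_smul, norm_smul, Real.norm_of_nonneg ht0, Real.norm_of_nonneg (sub_nonneg.2 ht1.le)]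
  nlinarith

/-- A line through an interior point of the unit ball meets the sphere in at most two points. -/
theorem eq_of_norm_eq_one_of_collinear {p z : E} {c s : ℝ} (hc : 0 < c) (hp : ‖p‖ = 1)
    (hq : ‖p - c • z‖ = 1) (hmid : ‖p - (c / 2) • z‖ < 1) (hs : ‖p + s • z‖ = 1) :
    s = 0 ∨ s = -c := by
  rcases lt_trichotomy 0 s with h | h | h
  · exfalso
    have h1 := norm_combo_lt_one hmid hs.le (t := (c / 2) / (c / 2 + s)) (by positivity)
      (by rw [div_lt_one (by positivity)]; linarith)
    refine h1.ne (Eq.trans ?_ hp)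
    congr 1
    match_scalars <;> field_simp <;> ring
  · exact Or.inl h.symm
  rcases lt_trichotomy s (-c) with h' | h' | h'
  · exfalso
    obtain ⟨d, rfl⟩ : ∃ d, s = -(d + c / 2) := ⟨-s - c / 2, by ring⟩
    have hd : 0 < d := by linarith
    have h1 := norm_combo_lt_one hmid hs.le (t := (c / 2) / d) (by positivity)
      (by rw [div_lt_one hd]; linarith)
    refine h1.ne (Eq.trans ?_ hq)
    congr 1
    match_scalars <;> field_simp <;> ring
  · exact Or.inr h'
  · exfalso
    rcases le_total (-(c / 2)) s with h2 | h2
    · have h1 := norm_combo_lt_one hmid hp.le (t := (s + c / 2) / (c / 2))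
        (div_nonneg (by linarith) (by positivity))
        (by rw [div_lt_one (by positivity)]; linarith)
      refine h1.ne (Eq.trans ?_ hs)
      congr 1
      match_scalars <;> field_simp <;> ring
    · have h1 := norm_combo_lt_one hmid hq.le (t := (-s - c / 2) / (c / 2))
        (div_nonneg (by linarith) (by positivity))
        (by rw [div_lt_one (by positivity)]; linarith)
      refine h1.ne (Eq.trans ?_ hs)
      congr 1
      match_scalars <;> field_simp <;> ring

theorem normDirDeriv_combo_add_neg (p w : E) (b c : ℝ) :
    normDirDeriv p (b • w + c • p) + normDirDeriv p (-(b • w + c • p)) =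
      |b| * (normDirDeriv p w + normDirDeriv p (-w)) := by
  have h1 : -(b • w + c • p) = -(b • w) + (-c) • p := by module
  rw [h1, normDirDeriv_add_smul_self, normDirDeriv_add_smul_self]
  rcases le_total 0 b with hb | hb
  · rw [← smul_neg, normDirDeriv_smul hb, normDirDeriv_smul hb, abs_of_nonneg hb]
    ring
  · have hb' := neg_nonneg.2 hb
    have h2 : b • w = (-b) • (-w) := by module
    have h3 : -(b • w) = (-b) • w := by module
    rw [h3, h2, normDirDeriv_smul hb', normDirDeriv_smul hb', abs_of_nonpos hb]
    ring

/-- Points where the norm has a corner. -/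
def IsNormCorner (p : E) : Prop := ∃ v, normDirDeriv p v + normDirDeriv p (-v) ≠ 0

theorem IsNormCorner.smul_pos {p : E} (h : IsNormCorner p) {c : ℝ} (hc : 0 < c) :
    IsNormCorner (c • p) := by
  obtain ⟨v, hv⟩ := h
  exact ⟨v, by rwa [normDirDeriv_smul_left hc, normDirDeriv_smul_left hc]⟩

theorem IsNormCorner.neg {p : E} (h : IsNormCorner p) : IsNormCorner (-p) := by
  obtain ⟨v, hv⟩ := h
  refine ⟨v, ?_⟩
  have h1 := normDirDeriv_neg_left p (-v)
  rw [neg_neg] at h1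
  rwa [h1, normDirDeriv_neg_left, add_comm]

/-- Linear coordinates in the plane along `z` and a vector `e` Birkhoff orthogonal to `z`. -/
structure CornerCoords (z : E) where
  e : E
  fst : E →ₗ[ℝ] ℝ
  snd : E →ₗ[ℝ] ℝ
  eq_add : ∀ x, x = fst x • e + snd x • z
  fst_e : fst e = 1
  fst_z : fst z = 0
  snd_e : snd e = 0
  snd_z : snd z = 1
  norm_e : ‖e‖ = 1
  one_le : ∀ s : ℝ, 1 ≤ ‖e + s • z‖

theorem exists_cornerCoords (hdim : Module.finrank ℝ E = 2) {z : E} (hz : z ≠ 0) :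
    Nonempty (CornerCoords z) := by
  have : FiniteDimensional ℝ E := Module.finite_of_finrank_eq_succ hdim
  obtain ⟨y, hy⟩ := exists_linearIndependent_pair_of_one_lt_finrank (R := ℝ)
    (by omega : 1 < Module.finrank ℝ E) hz
  have hclosed : IsClosed (Submodule.span ℝ {z} : Set E) := Submodule.closed_of_finiteDimensional _
  obtain ⟨w, hw, hdist⟩ := hclosed.exists_infDist_eq_dist ⟨0, Submodule.zero_mem _⟩ y
  obtain ⟨c, rfl⟩ := Submodule.mem_span_singleton.1 hw
  have hy' : LinearIndependent ℝ ![y, z] := by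
    rw [LinearIndependent.pair_symm_iff]; exact hy
  rw [LinearIndependent.pair_iff] at hy'
  have hne : y - c • z ≠ 0 := fun h => by
    have := hy' 1 (-c) (by rw [one_smul, neg_smul, ← sub_eq_add_neg, h])
    simp at this
  have hn : 0 < ‖y - c • z‖ := norm_pos_iff.2 hne
  set n := ‖y - c • z‖ with hn_def
  set e : E := n⁻¹ • (y - c • z) with he
  have hez : LinearIndependent ℝ ![e, z] := by
    rw [LinearIndependent.pair_iff]
    intro a b hab
    have h1 : (a * n⁻¹) • y + (b - a * n⁻¹ * c) • z = 0 := by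
      rw [← hab, he]; module
    obtain ⟨h2, h3⟩ := hy' _ _ h1
    have ha : a = 0 := by
      rcases mul_eq_zero.1 h2 with h | h
      · exact h
      · exact absurd h (inv_ne_zero hn.ne')
    subst ha
    simpa using h3
  let B := basisOfLinearIndependentOfCardEqFinrank hez (by simp [hdim])
  have hB0 : B 0 = e := by simp [B]
  have hB1 : B 1 = z := by simp [B]
  refine ⟨⟨e, B.coord 0, B.coord 1, fun x => ?_, ?_, ?_, ?_, ?_, ?_, fun s => ?_⟩⟩
  · have := B.sum_repr x
    rw [Fin.sum_univ_two, hB0, hB1] at this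
    exact this.symm
  · rw [← hB0]; simp
  · rw [← hB1]; simp
  · rw [← hB0]; simp
  · rw [← hB1]; simp
  · rw [he, norm_smul, norm_inv, Real.norm_of_nonneg hn.le, ← hn_def, inv_mul_cancel₀ hn.ne']
  · have h1 : n ≤ ‖y - (c - n * s) • z‖ := by
      rw [hn_def, ← dist_eq_norm, ← dist_eq_norm, ← hdist]
      exact Metric.infDist_le_dist_of_mem (Submodule.mem_span_singleton.2 ⟨_, rfl⟩)
    have h2 : e + s • z = n⁻¹ • (y - (c - n * s) • z) := by
      rw [he]
      match_scalars <;> field_simp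
      ring
    rw [h2, norm_smul, norm_inv, Real.norm_of_nonneg hn.le, ← div_eq_inv_mul, one_le_div hn]
    exact h1

namespace CornerCoords

variable {z : E}

theorem fst_combo (C : CornerCoords z) (a s : ℝ) : C.fst (a • C.e + s • z) = a := by
  simp [C.fst_e, C.fst_z]

theorem abs_fst_le (C : CornerCoords z) (x : E) : |C.fst x| ≤ ‖x‖ := by
  rcases eq_or_ne (C.fst x) 0 with h | h
  · simp [h]
  have h1 := C.one_le (C.snd x / C.fst x)
  have h2 : x = C.fst x • (C.e + (C.snd x / C.fst x) • z) := by
    conv_lhs => rw [C.eq_add x]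
    rw [smul_add, smul_smul, mul_div_cancel₀ _ h]
  have h3 : ‖x‖ = |C.fst x| * ‖C.e + (C.snd x / C.fst x) • z‖ := by
    conv_lhs => rw [h2]
    rw [norm_smul, Real.norm_eq_abs]
  rw [h3]
  exact le_mul_of_one_le_right (abs_nonneg _) h1

theorem add_neg_eq (C : CornerCoords z) (v : E) :
    normDirDeriv z v + normDirDeriv z (-v) =
      |C.fst v| * (normDirDeriv z C.e + normDirDeriv z (-C.e)) := by
  conv_lhs => rw [C.eq_add v]
  exact normDirDeriv_combo_add_neg z C.e _ _

theorem corner_pos (C : CornerCoords z) (hz : IsNormCorner z) :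
    0 < normDirDeriv z C.e + normDirDeriv z (-C.e) := by
  obtain ⟨v, hv⟩ := hz
  refine lt_of_le_of_ne (normDirDeriv_add_neg_nonneg _ _) fun h => hv ?_
  rw [C.add_neg_eq v, ← h, mul_zero]

/-- Segments in the direction of a corner are the only geodesics between their endpoints. -/
theorem eq_smul_of_norm_le (C : CornerCoords z) (hz : IsNormCorner z) (hz1 : ‖z‖ = 1)
    {p : E} {c s : ℝ}
    (h1 : ‖p‖ ≤ s) (h2 : ‖c • z - p‖ ≤ c - s) : p = s • z := by
  have h3 : normDirDeriv z (c • z - p) = normDirDeriv z (-p) + c := by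
    have := normDirDeriv_add_smul_self z (-p) c
    rwa [hz1, mul_one, neg_add_eq_sub] at this
  have h4 := normDirDeriv_le_norm z p
  have h5 := normDirDeriv_le_norm z (c • z - p)
  have h6 := C.add_neg_eq p
  have h7 := C.corner_pos hz
  have h8 : C.fst p = 0 := by
    have : |C.fst p| ≤ 0 := by
      by_contra! h
      nlinarith [mul_pos h h7]
    exact abs_nonpos_iff.1 this
  have h9 := C.eq_add p
  rw [h8, zero_smul, zero_add] at h9
  rw [h9, norm_smul, hz1, mul_one, Real.norm_eq_abs] at h1
  rw [h9, ← sub_smul, norm_smul, hz1, mul_one, Real.norm_eq_abs] at h2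
  rw [h9]
  congr 1
  linarith [(abs_le.1 h1).2, (abs_le.1 h2).2]

end CornerCoords

theorem countable_isNormCorner (hdim : Module.finrank ℝ E = 2) :
    {p : E | ‖p‖ = 1 ∧ IsNormCorner p}.Countable := by
  have : Nontrivial E := Module.nontrivial_of_finrank_pos (R := ℝ) (by omega)
  obtain ⟨z, hz⟩ := exists_ne (0 : E)
  obtain ⟨C⟩ := exists_cornerCoords hdim hz
  have hT := (convexOn_norm_add_smul C.e z univ
    convex_univ).countable_not_differentiableAt isOpen_univ
  set T := {x ∈ univ | ¬ DifferentiableAt ℝ (fun t : ℝ => ‖C.e + t • z‖) x}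
  let G : ℝ → E := fun t => ‖C.e + t • z‖⁻¹ • (C.e + t • z)
  refine (((hT.image G).union (hT.image fun t => -G t)).union
    ((countable_singleton (‖z‖⁻¹ • z)).union (countable_singleton (-(‖z‖⁻¹ • z))))).mono ?_
  have hsmooth : ∀ t : ℝ, t ∉ T → ¬ IsNormCorner (C.e + t • z) := by
    rintro t ht ⟨v, hv⟩
    apply hv
    have hd : DifferentiableAt ℝ (fun t : ℝ => ‖C.e + t • z‖) t := by
      by_contra h
      exact ht ⟨mem_univ _, h⟩
    set q := C.e + t • z with hq
    have hdir : ∀ σ : ℝ, normDirDeriv q (σ • z) =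
        deriv (fun t : ℝ => ‖C.e + t • z‖) t * σ := by
      intro σ
      have h1 : HasDerivAt (fun s : ℝ => t + s * σ) σ 0 := by
        simpa using ((hasDerivAt_id (0 : ℝ)).mul_const σ).const_add t
      have h2 := hd.hasDerivAt
      have h3 : HasDerivAt (fun s : ℝ => ‖C.e + (t + s * σ) • z‖)
          (deriv (fun t : ℝ => ‖C.e + t • z‖) t * σ) 0 :=
        HasDerivAt.comp (h₂ := fun t : ℝ => ‖C.e + t • z‖) 0 (by simpa using h2) h1
      have h4 : (fun s : ℝ => ‖q + s • σ • z‖) = fun s : ℝ => ‖C.e + (t + s * σ) • z‖ := by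
        funext s
        rw [hq]
        congr 1
        module
      unfold normDirDeriv
      rw [h4]
      exact h3.hasDerivWithinAt.derivWithin (uniqueDiffWithinAt_Ioi 0)
    have h1 := hdir 1
    have h2 := hdir (-1)
    rw [one_smul] at h1
    rw [neg_one_smul] at h2
    have hv' : v = (C.snd v - C.fst v * t) • z + C.fst v • q := by
      conv_lhs => rw [C.eq_add v]
      rw [hq]; module
    rw [hv', normDirDeriv_combo_add_neg, h1, h2]
    ring
  rintro p ⟨hp1, hp⟩
  have hx := C.eq_add p
  rcases lt_trichotomy (C.fst p) 0 with h | h | h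
  · left; right
    set t := C.snd p / C.fst p with ht
    have hpt : p = -((-C.fst p) • (C.e + t • z)) := by
      conv_lhs => rw [hx]
      rw [smul_add, smul_smul, neg_mul, ht, mul_div_cancel₀ _ h.ne]; module
    have hn := hp1
    rw [hpt, norm_neg, norm_smul, Real.norm_of_nonneg (by linarith)] at hn
    refine ⟨t, ?_, ?_⟩
    · by_contra hT'
      refine hsmooth t hT' ?_
      have hcorner := hp.neg
      rw [hpt, neg_neg] at hcorner
      have := hcorner.smul_pos (inv_pos.2 (by linarith : 0 < -C.fst p))
      rwa [inv_smul_smul₀ (by linarith)] at this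
    · simp only [G]
      rw [← eq_inv_of_mul_eq_one_left hn, ← hpt]
  · right
    rw [h, zero_smul, zero_add] at hx
    have hn := hp1
    rw [hx, norm_smul, Real.norm_eq_abs] at hn
    have hn' := eq_inv_of_mul_eq_one_left hn
    rcases abs_choice (C.snd p) with h' | h'
    · left
      rw [mem_singleton_iff, ← hn', h', ← hx]
    · right
      rw [mem_singleton_iff, ← hn', h', neg_smul, neg_neg, ← hx]
  · left; left
    set t := C.snd p / C.fst p with ht
    have hpt : p = C.fst p • (C.e + t • z) := by
      conv_lhs => rw [hx]
      rw [smul_add, smul_smul, ht, mul_div_cancel₀ _ h.ne']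
    have hn := hp1
    rw [hpt, norm_smul, Real.norm_of_nonneg h.le] at hn
    refine ⟨t, ?_, ?_⟩
    · by_contra hT'
      refine hsmooth t hT' ?_
      have hcorner := hp
      rw [hpt] at hcorner
      have := hcorner.smul_pos (inv_pos.2 h)
      rwa [inv_smul_smul₀ h.ne'] at this
    · simp only [G]
      rw [← eq_inv_of_mul_eq_one_left hn, ← hpt]

end Plane

section Tangent

variable {X Y : Type*} [NormedAddCommGroup X] [NormedSpace ℝ X]
  [NormedAddCommGroup Y] [NormedSpace ℝ Y]

/-- At a smooth point of the sphere of a plane, tangent vectors of equal length agree up to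
sign. -/
theorem eq_or_eq_neg_of_normDirDeriv_eq_zero (hdim : Module.finrank ℝ Y = 2) {p : Y}
    (hp : ‖p‖ = 1) (hs : ¬ IsNormCorner p) {v w : Y} (hv : normDirDeriv p v = 0)
    (hw : normDirDeriv p w = 0) (hvw : ‖v‖ = ‖w‖) : v = w ∨ v = -w := by
  obtain ⟨C⟩ := exists_cornerCoords hdim (z := p)
    (norm_ne_zero_iff.1 (by rw [hp]; exact one_ne_zero))
  have hs' : ∀ u, normDirDeriv p u + normDirDeriv p (-u) = 0 := by
    intro u
    by_contra h
    exact hs ⟨u, h⟩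
  have key : ∀ u, normDirDeriv p u = 0 → u = C.fst u • (C.e - normDirDeriv p C.e • p) := by
    intro u hu
    have h1 := C.eq_add u
    have h2 : normDirDeriv p (C.fst u • C.e) = C.fst u * normDirDeriv p C.e := by
      rcases le_total 0 (C.fst u) with h | h
      · exact normDirDeriv_smul h _ _
      · have h3 := hs' (C.fst u • C.e)
        rw [← neg_smul, normDirDeriv_smul (neg_nonneg.2 h)] at h3
        linarith
    have h3 : C.fst u * normDirDeriv p C.e + C.snd u = 0 := by
      rw [h1, normDirDeriv_add_smul_self, h2, hp, mul_one] at hu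
      exact hu
    conv_lhs => rw [h1, eq_neg_of_add_eq_zero_right h3]
    module
  have h1 := key v hv
  have h2 := key w hw
  set n := C.e - normDirDeriv p C.e • p
  rcases eq_or_ne n 0 with hn | hn
  · left
    rw [h1, h2, hn, smul_zero, smul_zero]
  · rw [h1, h2, norm_smul, norm_smul] at hvw
    have h3 := mul_right_cancel₀ (norm_ne_zero_iff.2 hn) hvw
    rw [Real.norm_eq_abs, Real.norm_eq_abs, abs_eq_abs] at h3
    rcases h3 with h3 | h3
    · left
      rw [h1, h3, ← h2]
    · right
      rw [h1, h3, neg_smul, ← h2]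

theorem smul_smul_slope {σ : ℝ} (hσ : σ * σ = 1) (g : ℝ → Y) (a b : ℝ) :
    (σ * (b - a)) • (σ • slope g a b) = g b - g a := by
  rw [smul_smul, mul_right_comm, hσ, one_mul, sub_smul_slope]
  rfl

/-- First order consequences of `τ` preserving distances, along a filter approaching `a` from one
side, determined by `σ`. -/
theorem normDirDeriv_of_tendsto_slope {τ : X → Y} (hmap : ∀ u : X, ‖u‖ = 1 → ‖τ u‖ = 1)
    (hiso : ∀ u v : X, ‖u‖ = 1 → ‖v‖ = 1 → ‖τ u - τ v‖ = ‖u - v‖)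
    {U : ℝ → X} {V : X} {W : Y} {a σ : ℝ} {l : Filter ℝ} [NeBot l] (hl : l ≤ 𝓝[≠] a)
    (hσ : σ * σ = 1) (hside : ∀ᶠ b in l, 0 < σ * (b - a)) (hUV : HasDerivAt U V a)
    (hU : ∀ᶠ b in 𝓝 a, ‖U b‖ = 1)
    (hW : Tendsto (slope (fun b => τ (U b)) a) l (𝓝 W)) :
    normDirDeriv (τ (U a)) (σ • W) = 0 ∧ ∀ y, ‖y‖ = 1 →
      normDirDeriv (τ (U a) - τ y) (σ • W) = normDirDeriv (U a - y) (σ • V) := by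
  have hV := (hasDerivAt_iff_tendsto_slope.1 hUV).mono_left hl
  have hUl : ∀ᶠ b in l, ‖U b‖ = 1 := (hl.trans nhdsWithin_le_nhds) hU
  have hUa : ‖U a‖ = 1 := hU.self_of_nhds
  have hh : Tendsto (fun b => σ * (b - a)) l (𝓝[>] 0) := by
    refine tendsto_nhdsWithin_iff.2 ⟨?_, hside⟩
    have : Tendsto (fun b => σ * (b - a)) (𝓝 a) (𝓝 (σ * (a - a))) :=
      (tendsto_id.sub_const a).const_mul σ
    rw [sub_self, mul_zero] at this
    exact this.mono_left (hl.trans nhdsWithin_le_nhds)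
  constructor
  · refine tendsto_nhds_unique (tendsto_normDirDeriv_of_tendsto (p := τ (U a)) hh
      (hW.const_smul σ)) (tendsto_const_nhds.congr' ?_)
    filter_upwards [hUl] with b hb1
    rw [smul_smul_slope hσ, add_sub_cancel, hmap _ hb1, hmap _ hUa, sub_self, zero_div]
  · intro y hy
    refine tendsto_nhds_unique (tendsto_normDirDeriv_of_tendsto (p := τ (U a) - τ y) hh
      (hW.const_smul σ)) ((tendsto_normDirDeriv_of_tendsto (p := U a - y) hh
      (hV.const_smul σ)).congr' ?_)
    filter_upwards [hUl] with b hb1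
    rw [smul_smul_slope hσ, smul_smul_slope hσ, sub_add_sub_cancel', sub_add_sub_cancel',
      hiso _ _ hb1 hy, hiso _ _ hUa hy]

/-- The norm of a difference `U a - U b` has distinct derivatives in the directions `±U' a`,
for `b` close to `a`. -/
theorem exists_normDirDeriv_ne {U : ℝ → X} {V : X} {a : ℝ} (hUV : HasDerivAt U V a) (hV : V ≠ 0)
    (hU : ∀ᶠ b in 𝓝 a, ‖U b‖ = 1) :
    ∃ y, ‖y‖ = 1 ∧ normDirDeriv (U a - y) V ≠ normDirDeriv (U a - y) (-V) := by
  have hlt : 𝓝[<] a ≤ 𝓝[≠] a := nhdsWithin_mono a (fun b (hb : b < a) => hb.ne)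
  have h1 := (hasDerivAt_iff_tendsto_slope.1 hUV).mono_left hlt
  have hU' : ∀ᶠ b in 𝓝[<] a, ‖U b‖ = 1 := nhdsWithin_le_nhds hU
  have h2 : ∀ᶠ b in 𝓝[<] a, ‖V - slope U a b‖ < ‖slope U a b‖ := by
    have h3 : Tendsto (fun b => ‖V - slope U a b‖) (𝓝[<] a) (𝓝 0) := by
      simpa using (h1.const_sub V).norm
    exact h3.eventually_lt h1.norm (norm_pos_iff.2 hV)
  obtain ⟨b, hb, hb1, hba⟩ := (h2.and (hU'.and self_mem_nhdsWithin)).exists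
  have hba : b < a := hba
  refine ⟨U b, hb1, ?_⟩
  set q := slope U a b with hq
  have h4 : U a - U b = (a - b) • q := by
    have := sub_smul_slope U a b
    rw [← neg_sub b a, neg_smul, hq, this, vsub_eq_sub, neg_sub]
  rw [h4, normDirDeriv_smul_left (sub_pos.2 hba), normDirDeriv_smul_left (sub_pos.2 hba)]
  have h5 := normDirDeriv_le_add q q V
  have h6 := normDirDeriv_le_add q (-V) (-q)
  rw [normDirDeriv_self, norm_sub_rev] at h5
  rw [normDirDeriv_neg_self, show -V - -q = -(V - q) by abel, norm_neg] at h6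
  intro h7
  linarith

/-- Along a curve on the sphere, an isometry `τ` has tangent vectors at points of
differentiability which go to smooth points. -/
theorem exists_tendsto_slope [FiniteDimensional ℝ Y] (hdim : Module.finrank ℝ Y = 2) {τ : X → Y}
    (hmap : ∀ u : X, ‖u‖ = 1 → ‖τ u‖ = 1)
    (hiso : ∀ u v : X, ‖u‖ = 1 → ‖v‖ = 1 → ‖τ u - τ v‖ = ‖u - v‖)
    {U : ℝ → X} {V : X} {a : ℝ} (hUV : HasDerivAt U V a) (hV : V ≠ 0)
    (hU : ∀ᶠ b in 𝓝 a, ‖U b‖ = 1) (hs : ¬ IsNormCorner (τ (U a)))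
    (F : Ultrafilter ℝ) (hF : ↑F ≤ 𝓝[≠] a) :
    ∃ W, Tendsto (slope (fun b => τ (U b)) a) F (𝓝 W) ∧ ∀ y, ‖y‖ = 1 →
      normDirDeriv (τ (U a) - τ y) W = normDirDeriv (U a - y) V ∧
      normDirDeriv (τ (U a) - τ y) (-W) = normDirDeriv (U a - y) (-V) := by
  have hUa : ‖U a‖ = 1 := hU.self_of_nhds
  have hlim : ∀ G : Ultrafilter ℝ, ↑G ≤ 𝓝[≠] a →
      ∃ W, Tendsto (slope (fun b => τ (U b)) a) G (𝓝 W) ∧ ‖W‖ = ‖V‖ := by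
    intro G hG
    have h1 := ((hasDerivAt_iff_tendsto_slope.1 hUV).mono_left hG).norm
    have h2 : (fun b => ‖slope U a b‖) =ᶠ[G] fun b => ‖slope (fun b => τ (U b)) a b‖ := by
      filter_upwards [(hG.trans nhdsWithin_le_nhds) hU] with b hb
      simp only [slope, vsub_eq_sub, norm_smul, hiso _ _ hb hUa]
    have h3 := h1.congr' h2
    have h4 : ∀ᶠ b in G, slope (fun b => τ (U b)) a b ∈ Metric.closedBall (0 : Y) (‖V‖ + 1) := by
      filter_upwards [h3.eventually_le_const (lt_add_one ‖V‖)] with b hb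
      simpa using hb
    obtain ⟨W, -, hW⟩ := (isCompact_closedBall (0 : Y) (‖V‖ + 1)).ultrafilter_le_nhds
      (G.map (slope (fun b => τ (U b)) a)) (le_principal_iff.2 h4)
    exact ⟨W, hW, tendsto_nhds_unique (Tendsto.norm hW) h3⟩
  have hs' : ∀ u, normDirDeriv (τ (U a)) u + normDirDeriv (τ (U a)) (-u) = 0 := by
    intro u
    by_contra h
    exact hs ⟨u, h⟩
  have hright : ∀ G : Ultrafilter ℝ, ↑G ≤ 𝓝[>] a →
      ∀ᶠ b in (G : Filter ℝ), 0 < (1 : ℝ) * (b - a) := by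
    intro G hG
    filter_upwards [hG self_mem_nhdsWithin] with b (hb : a < b)
    linarith
  have hleft : ∀ G : Ultrafilter ℝ, ↑G ≤ 𝓝[<] a →
      ∀ᶠ b in (G : Filter ℝ), 0 < (-1 : ℝ) * (b - a) := by
    intro G hG
    filter_upwards [hG self_mem_nhdsWithin] with b (hb : b < a)
    linarith
  have hgt : 𝓝[>] a ≤ 𝓝[≠] a := nhdsWithin_mono a (fun b (hb : a < b) => hb.ne')
  have hlt : 𝓝[<] a ≤ 𝓝[≠] a := nhdsWithin_mono a (fun b (hb : b < a) => hb.ne)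
  have hboth : ∀ R L : Ultrafilter ℝ, ↑R ≤ 𝓝[>] a → ↑L ≤ 𝓝[<] a →
      ∃ W, Tendsto (slope (fun b => τ (U b)) a) R (𝓝 W) ∧
        Tendsto (slope (fun b => τ (U b)) a) L (𝓝 W) ∧ ∀ y, ‖y‖ = 1 →
        normDirDeriv (τ (U a) - τ y) W = normDirDeriv (U a - y) V ∧
        normDirDeriv (τ (U a) - τ y) (-W) = normDirDeriv (U a - y) (-V) := by
    intro R L hR hL
    obtain ⟨W, hW, hWn⟩ := hlim R (hR.trans hgt)
    obtain ⟨W', hW', hWn'⟩ := hlim L (hL.trans hlt)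
    obtain ⟨h1, h2⟩ := normDirDeriv_of_tendsto_slope hmap hiso (hR.trans hgt) (by norm_num)
      (hright R hR) hUV hU hW
    obtain ⟨h3, h4⟩ := normDirDeriv_of_tendsto_slope hmap hiso (hL.trans hlt) (by norm_num)
      (hleft L hL) hUV hU hW'
    simp only [one_smul, neg_smul] at h1 h2 h3 h4
    have h5 : normDirDeriv (τ (U a)) W' = 0 := by linarith [hs' W']
    rcases eq_or_eq_neg_of_normDirDeriv_eq_zero hdim (hmap _ hUa) hs h1 h5 (hWn.trans hWn'.symm)
      with h | h
    · subst h
      exact ⟨W, hW, hW', fun y hy => ⟨h2 y hy, h4 y hy⟩⟩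
    · exfalso
      obtain ⟨y, hy, hne⟩ := exists_normDirDeriv_ne hUV hV hU
      refine hne ?_
      rw [← h2 y hy, ← h4 y hy, h]
  have hF' : ↑F ≤ 𝓝[<] a ⊔ 𝓝[>] a := by
    rwa [← nhdsWithin_union, Iio_union_Ioi]
  have hsplit : ↑F ≤ 𝓝[<] a ∨ ↑F ≤ 𝓝[>] a := by
    have hmem : Iio a ∪ Ioi a ∈ F := by
      rw [Iio_union_Ioi]
      exact hF self_mem_nhdsWithin
    have hFa : ↑F ≤ 𝓝 a := hF.trans nhdsWithin_le_nhds
    rcases Ultrafilter.union_mem_iff.1 hmem with h | h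
    · exact Or.inl (le_inf hFa (le_principal_iff.2 h))
    · exact Or.inr (le_inf hFa (le_principal_iff.2 h))
  rcases hsplit with h | h
  · obtain ⟨W, -, hW, hW'⟩ := hboth (Ultrafilter.of (𝓝[>] a)) F (Ultrafilter.of_le _) h
    exact ⟨W, hW, hW'⟩
  · obtain ⟨W, hW, -, hW'⟩ := hboth F (Ultrafilter.of (𝓝[<] a)) h (Ultrafilter.of_le _)
    exact ⟨W, hW, hW'⟩

end Tangent

section Height

variable {E : Type*} [NormedAddCommGroup E] [NormedSpace ℝ E]

/-- From a point of the unit ball, there is a last point of the ball in each direction. -/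
theorem exists_last_norm_le_one {x z : E} (hz : ‖z‖ = 1) (hx : ‖x‖ ≤ 1) :
    ∃ s : ℝ, 0 ≤ s ∧ ‖x + s • z‖ = 1 ∧ ∀ t, s < t → 1 < ‖x + t • z‖ := by
  have hcont : Continuous fun s : ℝ => ‖x + s • z‖ := by fun_prop
  have hK : IsCompact (Icc (0 : ℝ) 2 ∩ {s | ‖x + s • z‖ ≤ 1}) :=
    isCompact_Icc.inter_right (isClosed_le hcont continuous_const)
  have hfar : ∀ t : ℝ, 2 < t → 1 < ‖x + t • z‖ := by
    intro t ht
    have h1 := norm_sub_le (x + t • z) x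
    rw [add_sub_cancel_left, norm_smul, hz, mul_one, Real.norm_of_nonneg (by linarith)] at h1
    linarith
  obtain ⟨s, ⟨⟨hs0, hs2⟩, hs⟩, hmax⟩ := hK.exists_isGreatest ⟨0, by simpa using hx⟩
  have hlast : ∀ t, s < t → 1 < ‖x + t • z‖ := by
    intro t ht
    by_contra! h
    rcases lt_or_ge 2 t with h2 | h2
    · exact absurd h (hfar t h2).not_ge
    · exact absurd (hmax ⟨⟨hs0.trans ht.le, h2⟩, h⟩) ht.not_ge
  refine ⟨s, hs0, le_antisymm hs ?_, hlast⟩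
  have hlim : Tendsto (fun s : ℝ => ‖x + s • z‖) (𝓝[>] s) (𝓝 ‖x + s • z‖) :=
    hcont.continuousAt.tendsto.mono_left nhdsWithin_le_nhds
  refine ge_of_tendsto hlim ?_
  filter_upwards [self_mem_nhdsWithin] with t ht
  exact (hlast t ht).le

namespace CornerCoords

variable {z : E}

/-- `f` is the height function whose graph is the upper arc of the unit sphere. -/
def IsHeight (C : CornerCoords z) (f : ℝ → ℝ) : Prop :=
  ∀ a ∈ Icc (-1 : ℝ) 1, 0 ≤ f a ∧ ‖a • C.e + f a • z‖ = 1 ∧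
    ∀ t, f a < t → 1 < ‖a • C.e + t • z‖

theorem exists_isHeight (C : CornerCoords z) (hz : ‖z‖ = 1) : ∃ f, C.IsHeight f := by
  have : ∀ a : ℝ, ∃ s : ℝ, a ∈ Icc (-1 : ℝ) 1 → 0 ≤ s ∧ ‖a • C.e + s • z‖ = 1 ∧
      ∀ t, s < t → 1 < ‖a • C.e + t • z‖ := by
    intro a
    by_cases ha : a ∈ Icc (-1 : ℝ) 1
    · obtain ⟨s, hs⟩ := exists_last_norm_le_one (x := a • C.e) hz
        (by rw [norm_smul, C.norm_e, mul_one, Real.norm_eq_abs]; exact abs_le.2 ha)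
      exact ⟨s, fun _ => hs⟩
    · exact ⟨0, fun h => absurd h ha⟩
  choose f hf using this
  exact ⟨f, hf⟩

variable {C : CornerCoords z} {f : ℝ → ℝ}

theorem IsHeight.le_of_norm_le (hf : C.IsHeight f) {a t : ℝ} (ha : a ∈ Icc (-1 : ℝ) 1)
    (h : ‖a • C.e + t • z‖ ≤ 1) : t ≤ f a := by
  by_contra! h'
  exact absurd h ((hf a ha).2.2 t h').not_ge

theorem IsHeight.concaveOn (hf : C.IsHeight f) : ConcaveOn ℝ (Icc (-1) 1) f := by
  refine ⟨convex_Icc _ _, fun a ha b hb s t hs ht hst => ?_⟩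
  refine hf.le_of_norm_le (convex_Icc _ _ ha hb hs ht hst) ?_
  have h : (s • a + t • b) • C.e + (s • f a + t • f b) • z =
      s • (a • C.e + f a • z) + t • (b • C.e + f b • z) := by
    simp only [smul_eq_mul]; module
  rw [h]
  refine (norm_add_le _ _).trans ?_
  rw [norm_smul, norm_smul, (hf a ha).2.1, (hf b hb).2.1, Real.norm_of_nonneg hs,
    Real.norm_of_nonneg ht]
  linarith

theorem IsHeight.pos (hf : C.IsHeight f) (hz : ‖z‖ = 1) {a : ℝ} (ha : a ∈ Ioo (-1 : ℝ) 1) :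
    0 < f a := by
  have h : 1 - |a| ≤ f a := by
    refine hf.le_of_norm_le (Ioo_subset_Icc_self ha) ((norm_add_le _ _).trans ?_)
    have := abs_lt.2 ha
    rw [norm_smul, norm_smul, hz, C.norm_e, Real.norm_eq_abs, Real.norm_of_nonneg (by linarith)]
    linarith
  linarith [abs_lt.2 ha]

theorem neg_mem_Ioo {a : ℝ} (ha : a ∈ Ioo (-1 : ℝ) 1) : -a ∈ Ioo (-1 : ℝ) 1 :=
  ⟨by linarith [ha.2], by linarith [ha.1]⟩

theorem IsHeight.norm_lower (hf : C.IsHeight f) {a : ℝ} (ha : a ∈ Ioo (-1 : ℝ) 1) :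
    ‖(a • C.e + f a • z) - (f a + f (-a)) • z‖ = 1 := by
  rw [← (hf (-a) (Ioo_subset_Icc_self (neg_mem_Ioo ha))).2.1, ← norm_neg]
  congr 1
  module

theorem IsHeight.norm_mid_lt (hf : C.IsHeight f) (hz : ‖z‖ = 1) {a : ℝ}
    (ha : a ∈ Ioo (-1 : ℝ) 1) :
    ‖(a • C.e + f a • z) - ((f a + f (-a)) / 2) • z‖ < 1 := by
  have h0 : ‖a • C.e‖ < 1 := by
    rw [norm_smul, C.norm_e, mul_one, Real.norm_eq_abs]
    exact abs_lt.2 ha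
  have h1 := hf.pos hz ha
  have h2 := hf.pos hz (neg_mem_Ioo ha)
  rcases le_total (f (-a)) (f a) with h | h
  · convert norm_combo_lt_one h0 (hf a (Ioo_subset_Icc_self ha)).2.1.le
      (t := (f a - f (-a)) / (2 * f a)) (div_nonneg (by linarith) (by positivity))
      (by rw [div_lt_one (by positivity)]; linarith) using 2
    match_scalars <;> field_simp <;> ring
  · convert norm_combo_lt_one h0 (hf.norm_lower ha).le
      (t := (f (-a) - f a) / (2 * f (-a))) (div_nonneg (by linarith) (by positivity))
      (by rw [div_lt_one (by positivity)]; linarith) using 2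
    match_scalars <;> field_simp <;> ring

theorem IsHeight.eq_or_eq (hf : C.IsHeight f) (hz : ‖z‖ = 1) {x : E} (hx : ‖x‖ = 1)
    (ha : C.fst x ∈ Ioo (-1 : ℝ) 1) :
    x = C.fst x • C.e + f (C.fst x) • z ∨
      x = (C.fst x • C.e + f (C.fst x) • z) - (f (C.fst x) + f (-C.fst x)) • z := by
  have h1 := hf.pos hz ha
  have h2 := hf.pos hz (neg_mem_Ioo ha)
  have h3 : x = (C.fst x • C.e + f (C.fst x) • z) + (C.snd x - f (C.fst x)) • z := by
    conv_lhs => rw [C.eq_add x]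
    module
  rcases eq_of_norm_eq_one_of_collinear (by positivity) (hf _ (Ioo_subset_Icc_self ha)).2.1
    (hf.norm_lower ha) (hf.norm_mid_lt hz ha) (s := C.snd x - f (C.fst x)) (by rw [← h3, hx])
    with h | h
  · left
    conv_lhs => rw [h3, h, zero_smul, add_zero]
  · right
    conv_lhs => rw [h3, h, neg_smul, ← sub_eq_add_neg]

end CornerCoords

end Height

/-- A surjective isometry between the unit spheres. -/
structure IsSphereIsometry {X Y : Type*} [NormedAddCommGroup X] [NormedAddCommGroup Y]
    (τ : X → Y) : Prop where
  norm_map : ∀ u : X, ‖u‖ = 1 → ‖τ u‖ = 1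
  surj : ∀ w : Y, ‖w‖ = 1 → ∃ u : X, ‖u‖ = 1 ∧ τ u = w
  norm_sub : ∀ u v : X, ‖u‖ = 1 → ‖v‖ = 1 → ‖τ u - τ v‖ = ‖u - v‖

section SphereIsometry

variable {X Y : Type*} [NormedAddCommGroup X] [NormedAddCommGroup Y] {τ : X → Y}

theorem IsSphereIsometry.continuousOn (hτ : IsSphereIsometry τ) :
    ContinuousOn τ (Metric.sphere 0 1) := by
  refine LipschitzOnWith.continuousOn (K := 1) (LipschitzOnWith.of_dist_le_mul fun x hx y hy => ?_)
  rw [mem_sphere_zero_iff_norm] at hx hy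
  rw [dist_eq_norm, dist_eq_norm, hτ.norm_sub x y hx hy, NNReal.coe_one, one_mul]

theorem IsSphereIsometry.injOn (hτ : IsSphereIsometry τ) : InjOn τ (Metric.sphere 0 1) := by
  intro x hx y hy hxy
  rw [mem_sphere_zero_iff_norm] at hx hy
  rw [← sub_eq_zero, ← norm_eq_zero, ← hτ.norm_sub x y hx hy, hxy, sub_self, norm_zero]

end SphereIsometry

section Upper

variable {X Y : Type*} [NormedAddCommGroup X] [NormedSpace ℝ X]
  [NormedAddCommGroup Y] {τ : X → Y} {z : X} {C : CornerCoords z} {f : ℝ → ℝ}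

namespace CornerCoords

/-- The point of the graph of `f` over `a`. -/
def graphPoint (C : CornerCoords z) (f : ℝ → ℝ) (a : ℝ) : X := a • C.e + f a • z

/-- The length of the chord of the sphere through `C.graphPoint f a` in the direction `z`. -/
def chord (f : ℝ → ℝ) (a : ℝ) : ℝ := f a + f (-a)

theorem fst_graphPoint (C : CornerCoords z) (f : ℝ → ℝ) (a : ℝ) :
    C.fst (C.graphPoint f a) = a := C.fst_combo a _

theorem injective_graphPoint (C : CornerCoords z) (f : ℝ → ℝ) :
    Function.Injective (C.graphPoint f) := fun a b h => by
  rw [← C.fst_graphPoint f a, h, C.fst_graphPoint]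

theorem IsHeight.norm_graphPoint (hf : C.IsHeight f) {a : ℝ} (ha : a ∈ Ioo (-1 : ℝ) 1) :
    ‖C.graphPoint f a‖ = 1 := (hf a (Ioo_subset_Icc_self ha)).2.1

theorem IsHeight.eventually_norm_graphPoint (hf : C.IsHeight f) {a : ℝ}
    (ha : a ∈ Ioo (-1 : ℝ) 1) : ∀ᶠ b in 𝓝 a, ‖C.graphPoint f b‖ = 1 := by
  filter_upwards [isOpen_Ioo.mem_nhds ha] with b hb using hf.norm_graphPoint hb

theorem IsHeight.chord_pos (hf : C.IsHeight f) (hz : ‖z‖ = 1) {a : ℝ} (ha : a ∈ Ioo (-1 : ℝ) 1) :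
    0 < chord f a := add_pos (hf.pos hz ha) (hf.pos hz (neg_mem_Ioo ha))

theorem IsHeight.norm_sub_chord (hf : C.IsHeight f) {a : ℝ} (ha : a ∈ Ioo (-1 : ℝ) 1) :
    ‖C.graphPoint f a - chord f a • z‖ = 1 := hf.norm_lower ha

theorem IsHeight.continuousOn (hf : C.IsHeight f) : ContinuousOn f (Ioo (-1) 1) :=
  (hf.concaveOn.subset Ioo_subset_Icc_self (convex_Ioo _ _)).continuousOn isOpen_Ioo

theorem IsHeight.continuousOn_chord (hf : C.IsHeight f) : ContinuousOn (chord f) (Ioo (-1) 1) :=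
  hf.continuousOn.add (hf.continuousOn.comp continuousOn_neg fun _ ha => neg_mem_Ioo ha)

theorem IsHeight.continuousOn_graphPoint (hf : C.IsHeight f) :
    ContinuousOn (C.graphPoint f) (Ioo (-1) 1) :=
  (continuousOn_id.smul continuousOn_const).add (hf.continuousOn.smul continuousOn_const)

theorem IsHeight.continuousOn_comp_graphPoint (hτ : IsSphereIsometry τ) (hf : C.IsHeight f) :
    ContinuousOn (fun a => τ (C.graphPoint f a)) (Ioo (-1) 1) :=
  hτ.continuousOn.comp hf.continuousOn_graphPoint fun _ ha =>
    mem_sphere_zero_iff_norm.2 (hf.norm_graphPoint ha)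

theorem hasDerivAt_graphPoint (C : CornerCoords z) {a f' : ℝ} (h : HasDerivAt f f' a) :
    HasDerivAt (C.graphPoint f) (C.e + f' • z) a := by
  have h1 := ((hasDerivAt_id a).smul_const C.e).add (h.smul_const z)
  rw [one_smul] at h1
  exact h1

theorem fst_tangent (C : CornerCoords z) (c : ℝ) : C.fst (C.e + c • z) = 1 := by
  simp [C.fst_e, C.fst_z]

theorem tangent_ne_zero (C : CornerCoords z) (c : ℝ) : C.e + c • z ≠ 0 := fun h => by
  have := C.fst_tangent c
  rw [h, map_zero] at this
  exact zero_ne_one this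

variable [NormedSpace ℝ Y]

/-- The parameters where the height is not differentiable, or where the image under `τ` of the
point of the upper arc is a corner. -/
def exceptional (C : CornerCoords z) (f : ℝ → ℝ) (τ : X → Y) : Set ℝ :=
  {a ∈ Ioo (-1 : ℝ) 1 | ¬ DifferentiableAt ℝ f a ∨ IsNormCorner (τ (C.graphPoint f a))}

theorem IsHeight.countable_exceptional (hdim : Module.finrank ℝ Y = 2) (hτ : IsSphereIsometry τ)
    (hf : C.IsHeight f) : (C.exceptional f τ).Countable := by
  have h1 := ConvexOn.countable_not_differentiableAt isOpen_Ioo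
    (hf.concaveOn.subset Ioo_subset_Icc_self (convex_Ioo (-1 : ℝ) 1)).neg
  have hinj : InjOn (fun a => τ (C.graphPoint f a)) (Ioo (-1) 1) := fun a ha b hb hab =>
    C.injective_graphPoint f (hτ.injOn (mem_sphere_zero_iff_norm.2 (hf.norm_graphPoint ha))
      (mem_sphere_zero_iff_norm.2 (hf.norm_graphPoint hb)) hab)
  have h2 : {a ∈ Ioo (-1 : ℝ) 1 | IsNormCorner (τ (C.graphPoint f a))}.Countable := by
    refine MapsTo.countable_of_injOn (t := {p : Y | ‖p‖ = 1 ∧ IsNormCorner p})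
      (fun a ha => ⟨hτ.norm_map _ (hf.norm_graphPoint ha.1), ha.2⟩)
      (hinj.mono (sep_subset _ _)) (countable_isNormCorner hdim)
  refine (h1.union h2).mono ?_
  rintro a ⟨ha, h | h⟩
  · exact Or.inl ⟨ha, fun h' => h (differentiableAt_neg_iff.1 h')⟩
  · exact Or.inr ⟨ha, h⟩

theorem IsHeight.exists_notMem_exceptional (hdim : Module.finrank ℝ Y = 2)
    (hτ : IsSphereIsometry τ) (hf : C.IsHeight f) :
    ∃ a ∈ Ioo (-1 : ℝ) 1, a ∉ C.exceptional f τ := by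
  by_contra! h
  have h1 := (hf.countable_exceptional hdim hτ).mono h
  rw [← Cardinal.le_aleph0_iff_set_countable, Cardinal.mk_Ioo_real (by norm_num)] at h1
  exact absurd h1 Cardinal.aleph0_lt_continuum.not_ge

/-- Along an ultrafilter, the image under `τ` of the upper arc has tangents at all parameters which
are not exceptional. -/
theorem IsHeight.exists_tendsto_slope (hdim : Module.finrank ℝ Y = 2)
    (hτ : IsSphereIsometry τ) (hf : C.IsHeight f) (hz : ‖z‖ = 1) {a : ℝ} (ha : a ∈ Ioo (-1 : ℝ) 1)
    (hae : a ∉ C.exceptional f τ) (F : Ultrafilter ℝ) (hF : ↑F ≤ 𝓝[≠] a) :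
    ∃ W, Tendsto (slope (fun b => τ (C.graphPoint f b)) a) F (𝓝 W) ∧
      ∀ σ : ℝ, σ = 1 ∨ σ = -1 →
      normDirDeriv (τ (C.graphPoint f a) - τ (C.graphPoint f a - chord f a • z)) (σ • W) =
      normDirDeriv z (σ • (C.e + deriv f a • z)) := by
  have : FiniteDimensional ℝ Y := Module.finite_of_finrank_eq_succ hdim
  have h1 : DifferentiableAt ℝ f a := by
    by_contra h
    exact hae ⟨ha, Or.inl h⟩
  have h2 : ¬ IsNormCorner (τ (C.graphPoint f a)) := fun h => hae ⟨ha, Or.inr h⟩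
  obtain ⟨W, hW, h⟩ := _root_.exists_tendsto_slope hdim hτ.norm_map hτ.norm_sub
    (C.hasDerivAt_graphPoint h1.hasDerivAt) (C.tangent_ne_zero _)
    (hf.eventually_norm_graphPoint ha) h2 F hF
  refine ⟨W, hW, fun σ hσ => ?_⟩
  have h3 := h _ (hf.norm_sub_chord ha)
  rw [sub_sub_cancel, normDirDeriv_smul_left (hf.chord_pos hz ha),
    normDirDeriv_smul_left (hf.chord_pos hz ha)] at h3
  rcases hσ with rfl | rfl
  · simpa only [one_smul] using h3.1
  · simpa only [neg_one_smul] using h3.2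

/-- The chords in the direction of a corner are mapped to chords in the direction of a corner. -/
theorem IsHeight.exists_corner (hdim : Module.finrank ℝ Y = 2)
    (hτ : IsSphereIsometry τ) (hf : C.IsHeight f) (hz : ‖z‖ = 1) (hc : IsNormCorner z) :
    ∃ z' : Y, ‖z'‖ = 1 ∧ IsNormCorner z' ∧ ∀ a ∈ Ioo (-1 : ℝ) 1,
      τ (C.graphPoint f a - chord f a • z) = τ (C.graphPoint f a) - chord f a • z' := by
  set δ : ℝ → Y := fun a =>
    (chord f a)⁻¹ • (τ (C.graphPoint f a) - τ (C.graphPoint f a - chord f a • z)) with hδ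
  have hδn : ∀ a ∈ Ioo (-1 : ℝ) 1, ‖δ a‖ = 1 := by
    intro a ha
    have h := hf.chord_pos hz ha
    rw [hδ, norm_smul, hτ.norm_sub _ _ (hf.norm_graphPoint ha) (hf.norm_sub_chord ha),
      sub_sub_cancel, norm_smul, hz, mul_one, ← norm_mul, inv_mul_cancel₀ h.ne', norm_one]
  have hδc : ContinuousOn δ (Ioo (-1) 1) := by
    refine (hf.continuousOn_chord.inv₀ fun a ha => (hf.chord_pos hz ha).ne').smul
      ((hf.continuousOn_comp_graphPoint hτ).sub (hτ.continuousOn.comp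
        (hf.continuousOn_graphPoint.sub (hf.continuousOn_chord.smul continuousOn_const))
        fun a ha => mem_sphere_zero_iff_norm.2 (hf.norm_sub_chord ha)))
  have hcorner : ∀ a ∈ Ioo (-1 : ℝ) 1, a ∉ C.exceptional f τ → IsNormCorner (δ a) := by
    intro a ha hae
    obtain ⟨W, -, hW⟩ := hf.exists_tendsto_slope hdim hτ hz ha hae (Ultrafilter.of (𝓝[≠] a))
      (Ultrafilter.of_le _)
    refine IsNormCorner.smul_pos ⟨W, ?_⟩ (inv_pos.2 (hf.chord_pos hz ha))
    have h1 := hW 1 (Or.inl rfl)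
    have h2 := hW (-1) (Or.inr rfl)
    rw [one_smul, one_smul] at h1
    rw [neg_one_smul, neg_one_smul] at h2
    rw [h1, h2, C.add_neg_eq, C.fst_tangent, abs_one, one_mul]
    exact (C.corner_pos hc).ne'
  have hcount : (δ '' Ioo (-1) 1).Countable := by
    refine ((countable_isNormCorner hdim).union
      ((hf.countable_exceptional hdim hτ).image δ)).mono ?_
    rintro _ ⟨a, ha, rfl⟩
    by_cases hae : a ∈ C.exceptional f τ
    · exact Or.inr ⟨a, hae, rfl⟩
    · exact Or.inl ⟨hδn a ha, hcorner a ha hae⟩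
  have hsub : (δ '' Ioo (-1) 1).Subsingleton :=
    hcount.isTotallyDisconnected _ Subset.rfl (isPreconnected_Ioo.image _ hδc)
  obtain ⟨b, hb, hbe⟩ := hf.exists_notMem_exceptional hdim hτ
  refine ⟨δ b, hδn b hb, hcorner b hb hbe, fun a ha => ?_⟩
  rw [hsub (mem_image_of_mem δ hb) (mem_image_of_mem δ ha), hδ,
    smul_inv_smul₀ (hf.chord_pos hz ha).ne', sub_sub_cancel]

end CornerCoords

end Upper

section Transfer

variable {X Y : Type*} [NormedAddCommGroup X] [NormedSpace ℝ X]
  [NormedAddCommGroup Y] [NormedSpace ℝ Y] {τ : X → Y} {z : X} {z' : Y} {C : CornerCoords z}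
  {C' : CornerCoords z'} {f : ℝ → ℝ}

namespace CornerCoords

theorem IsHeight.norm_image_mid_lt (hτ : IsSphereIsometry τ) (hf : C.IsHeight f) (hz : ‖z‖ = 1)
    (hc : IsNormCorner z) (hz' : ‖z'‖ = 1) {a : ℝ} (ha : a ∈ Ioo (-1 : ℝ) 1)
    (h : τ (C.graphPoint f a - chord f a • z) = τ (C.graphPoint f a) - chord f a • z') :
    ‖τ (C.graphPoint f a) - (chord f a / 2) • z'‖ < 1 := by
  have hU := hf.norm_graphPoint ha
  have hL := hf.norm_sub_chord ha
  have hpos := half_pos (hf.chord_pos hz ha)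
  set u := C.graphPoint f a
  set c := chord f a with hcdef
  by_contra! h1
  have h2 : ‖τ u - (c / 2) • z'‖ ≤ 1 := by
    have h3 : τ u - (c / 2) • z' = (1 / 2 : ℝ) • (τ u + τ (u - c • z)) := by
      rw [h]; module
    rw [h3, norm_smul]
    have h4 := norm_add_le (τ u) (τ (u - c • z))
    rw [hτ.norm_map _ hU, hτ.norm_map _ hL] at h4
    norm_num
    linarith
  obtain ⟨x, hx, hxe⟩ := hτ.surj _ (le_antisymm h2 h1)
  have h5 : ‖u - x‖ = c / 2 := by
    rw [← hτ.norm_sub _ _ hU hx, hxe, sub_sub_cancel, norm_smul, hz', mul_one,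
      Real.norm_of_nonneg hpos.le]
  have h6 : ‖c • z - (u - x)‖ = c / 2 := by
    rw [show c • z - (u - x) = x - (u - c • z) by abel, ← hτ.norm_sub _ _ hx hL, hxe, h,
      sub_sub_sub_cancel_left, ← sub_smul, norm_smul, hz', mul_one, sub_half,
      Real.norm_of_nonneg hpos.le]
  have h7 := C.eq_smul_of_norm_le hc hz h5.le (h6.trans (sub_half c).symm).le
  have h8 := hf.norm_mid_lt hz ha
  refine h8.ne ?_
  rw [← hx, ← sub_sub_cancel u x, h7]
  rfl

theorem IsHeight.injOn_fst (hτ : IsSphereIsometry τ) (hf : C.IsHeight f) (hz : ‖z‖ = 1)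
    (hc : IsNormCorner z) (hz' : ‖z'‖ = 1) (h : ∀ a ∈ Ioo (-1 : ℝ) 1,
      τ (C.graphPoint f a - chord f a • z) = τ (C.graphPoint f a) - chord f a • z')
    (C' : CornerCoords z') :
    InjOn (fun a => C'.fst (τ (C.graphPoint f a))) (Ioo (-1) 1) := by
  intro a ha b hb hab
  have hab : C'.fst (τ (C.graphPoint f a)) = C'.fst (τ (C.graphPoint f b)) := hab
  have h1 : τ (C.graphPoint f b) = τ (C.graphPoint f a) +
      (C'.snd (τ (C.graphPoint f b)) - C'.snd (τ (C.graphPoint f a))) • z' := by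
    conv_lhs => rw [C'.eq_add (τ (C.graphPoint f b)), ← hab]
    conv_rhs => rw [C'.eq_add (τ (C.graphPoint f a))]
    simp only [map_add, map_smul, C'.snd_e, C'.snd_z, smul_eq_mul, mul_zero, mul_one, zero_add]
    module
  have hUa := hf.norm_graphPoint ha
  have hUb := hf.norm_graphPoint hb
  have hLa := hf.norm_sub_chord ha
  have h2 := hτ.norm_map _ hLa
  rw [h a ha] at h2
  rcases eq_of_norm_eq_one_of_collinear (hf.chord_pos hz ha) (hτ.norm_map _ hUa) h2
    (hf.norm_image_mid_lt hτ hz hc hz' ha (h a ha)) (h1 ▸ hτ.norm_map _ hUb) with h3 | h3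
  · rw [h3, zero_smul, add_zero] at h1
    exact (C.injective_graphPoint f (hτ.injOn (mem_sphere_zero_iff_norm.2 hUb)
      (mem_sphere_zero_iff_norm.2 hUa) h1)).symm
  · rw [h3, neg_smul, ← sub_eq_add_neg, ← h a ha] at h1
    have h4 := congrArg C.fst (hτ.injOn (mem_sphere_zero_iff_norm.2 hUb)
      (mem_sphere_zero_iff_norm.2 hLa) h1)
    rw [map_sub, map_smul, C.fst_z, smul_zero, sub_zero, C.fst_graphPoint, C.fst_graphPoint] at h4
    exact h4.symm

/-- The coordinates with the first basis vector reversed. -/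
def flip (C : CornerCoords z) : CornerCoords z where
  e := -C.e
  fst := -C.fst
  snd := C.snd
  eq_add x := by simpa using C.eq_add x
  fst_e := by simp [C.fst_e]
  fst_z := by simp [C.fst_z]
  snd_e := by simp [C.snd_e]
  snd_z := C.snd_z
  norm_e := by simp [C.norm_e]
  one_le s := by
    have := C.one_le (-s)
    rwa [← norm_neg, neg_add, ← neg_smul, neg_neg] at this

theorem IsHeight.exists_strictMonoOn_fst (hdim : Module.finrank ℝ Y = 2) (hτ : IsSphereIsometry τ)
    (hf : C.IsHeight f) (hz : ‖z‖ = 1) (hc : IsNormCorner z) (hz' : ‖z'‖ = 1)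
    (h : ∀ a ∈ Ioo (-1 : ℝ) 1,
      τ (C.graphPoint f a - chord f a • z) = τ (C.graphPoint f a) - chord f a • z') :
    ∃ C' : CornerCoords z',
      StrictMonoOn (fun a => C'.fst (τ (C.graphPoint f a))) (Ioo (-1) 1) := by
  have : FiniteDimensional ℝ Y := Module.finite_of_finrank_eq_succ hdim
  obtain ⟨C'⟩ := exists_cornerCoords hdim (z := z')
    (norm_ne_zero_iff.1 (by rw [hz']; exact one_ne_zero))
  have hcont : ContinuousOn (fun a => C'.fst (τ (C.graphPoint f a))) (Ioo (-1) 1) :=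
    C'.fst.continuous_of_finiteDimensional.comp_continuousOn (hf.continuousOn_comp_graphPoint hτ)
  rcases hcont.strictMonoOn_of_injOn_Ioo (by norm_num) (hf.injOn_fst hτ hz hc hz' h C') with h1 | h1
  · exact ⟨C', h1⟩
  · exact ⟨C'.flip, h1.neg⟩

/-- The linear map sending `z` to `z'` which is compatible with the one-sided derivatives of the
norms at `z` and `z'`. -/
noncomputable def transfer (C : CornerCoords z) (C' : CornerCoords z') : X →ₗ[ℝ] Y :=
  C.fst.smulRight
    (((normDirDeriv z C.e + normDirDeriv z (-C.e)) /
        (normDirDeriv z' C'.e + normDirDeriv z' (-C'.e))) • (C'.e - normDirDeriv z' C'.e • z') +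
      normDirDeriv z C.e • z') + C.snd.smulRight z'

theorem transfer_self (C : CornerCoords z) (C' : CornerCoords z') : C.transfer C' z = z' := by
  simp [transfer, C.fst_z, C.snd_z]

theorem normDirDeriv_eq (C : CornerCoords z) (hz : ‖z‖ = 1) {v : X} (hv : 0 ≤ C.fst v) :
    normDirDeriv z v = C.fst v * normDirDeriv z C.e + C.snd v := by
  conv_lhs => rw [C.eq_add v]
  rw [normDirDeriv_add_smul_self, normDirDeriv_smul hv, hz, mul_one]

theorem eq_transfer (C : CornerCoords z) (C' : CornerCoords z') (hz : ‖z‖ = 1) (hz' : ‖z'‖ = 1)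
    (hc' : IsNormCorner z') {v : X} {w : Y} (hv : 0 ≤ C.fst v) (hw : 0 ≤ C'.fst w)
    (h1 : normDirDeriv z' w = normDirDeriv z v)
    (h2 : normDirDeriv z' (-w) = normDirDeriv z (-v)) : w = C.transfer C' v := by
  have h3 := C.add_neg_eq v
  have h4 := C'.add_neg_eq w
  have hpos := C'.corner_pos hc'
  rw [h1, h2, h3, abs_of_nonneg hv, abs_of_nonneg hw] at h4
  rw [C.normDirDeriv_eq hz hv, C'.normDirDeriv_eq hz' hw] at h1
  set κ := normDirDeriv z C.e + normDirDeriv z (-C.e)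
  set κ' := normDirDeriv z' C'.e + normDirDeriv z' (-C'.e)
  have h5 : C'.fst w = C.fst v * (κ / κ') := by
    rw [← mul_div_assoc, h4, mul_div_cancel_right₀ _ hpos.ne']
  have h6 : C'.snd w = C.fst v * normDirDeriv z C.e + C.snd v -
      C.fst v * (κ / κ') * normDirDeriv z' C'.e := by
    rw [← h5]; linarith
  conv_lhs => rw [C'.eq_add w, h5, h6]
  simp only [transfer, LinearMap.add_apply, LinearMap.smulRight_apply]
  module

theorem IsHeight.hasDerivAt_comp_graphPoint (hdim : Module.finrank ℝ Y = 2)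
    (hτ : IsSphereIsometry τ) (hf : C.IsHeight f) (hz : ‖z‖ = 1) (hz' : ‖z'‖ = 1)
    (hc' : IsNormCorner z')
    (h : ∀ a ∈ Ioo (-1 : ℝ) 1,
      τ (C.graphPoint f a - chord f a • z) = τ (C.graphPoint f a) - chord f a • z')
    (hmono : StrictMonoOn (fun a => C'.fst (τ (C.graphPoint f a))) (Ioo (-1) 1))
    {a : ℝ} (ha : a ∈ Ioo (-1 : ℝ) 1) (hae : a ∉ C.exceptional f τ) :
    HasDerivAt (fun b => τ (C.graphPoint f b)) (C.transfer C' (C.e + deriv f a • z)) a := by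
  have : FiniteDimensional ℝ Y := Module.finite_of_finrank_eq_succ hdim
  rw [hasDerivAt_iff_tendsto_slope, tendsto_iff_ultrafilter]
  intro F hF
  obtain ⟨W, hW, hWd⟩ := hf.exists_tendsto_slope hdim hτ hz ha hae F hF
  have h1 := hWd 1 (Or.inl rfl)
  have h2 := hWd (-1) (Or.inr rfl)
  rw [h a ha, sub_sub_cancel, normDirDeriv_smul_left (hf.chord_pos hz ha)] at h1 h2
  rw [one_smul, one_smul] at h1
  rw [neg_one_smul, neg_one_smul] at h2
  have h3 : 0 ≤ C'.fst W := by
    refine ge_of_tendsto ((C'.fst.continuous_of_finiteDimensional.tendsto W).comp hW) ?_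
    filter_upwards [hF self_mem_nhdsWithin,
      hF (nhdsWithin_le_nhds (isOpen_Ioo.mem_nhds ha))] with b hb hb'
    simp only [Function.comp, slope, vsub_eq_sub, map_smul, map_sub, smul_eq_mul]
    rcases lt_or_gt_of_ne hb with hb | hb
    · exact mul_nonneg_of_nonpos_of_nonpos (inv_nonpos.2 (sub_nonpos.2 hb.le))
        (sub_nonpos.2 (hmono hb' ha hb).le)
    · exact mul_nonneg (inv_nonneg.2 (sub_nonneg.2 hb.le)) (sub_nonneg.2 (hmono ha hb' hb).le)
  rwa [← C.eq_transfer C' hz hz' hc' (by rw [C.fst_tangent]; exact zero_le_one) h3 h1 h2]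

theorem IsHeight.exists_eq_add_const (hdimX : Module.finrank ℝ X = 2)
    (hdim : Module.finrank ℝ Y = 2)
    (hτ : IsSphereIsometry τ) (hf : C.IsHeight f) (hz : ‖z‖ = 1) (hz' : ‖z'‖ = 1)
    (hc' : IsNormCorner z')
    (h : ∀ a ∈ Ioo (-1 : ℝ) 1,
      τ (C.graphPoint f a - chord f a • z) = τ (C.graphPoint f a) - chord f a • z')
    (hmono : StrictMonoOn (fun a => C'.fst (τ (C.graphPoint f a))) (Ioo (-1) 1)) :
    ∃ k : Y, ∀ x, ‖x‖ = 1 → C.fst x ∈ Ioo (-1 : ℝ) 1 → τ x = C.transfer C' x + k := by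
  have : FiniteDimensional ℝ X := Module.finite_of_finrank_eq_succ hdimX
  have : FiniteDimensional ℝ Y := Module.finite_of_finrank_eq_succ hdim
  have : CompleteSpace Y := FiniteDimensional.complete ℝ Y
  set A := LinearMap.toContinuousLinearMap (C.transfer C') with hA
  set g : ℝ → Y := fun a => τ (C.graphPoint f a) - A (C.graphPoint f a) with hg
  have hgc : ContinuousOn g (Ioo (-1) 1) := (hf.continuousOn_comp_graphPoint hτ).sub
    (A.continuous.comp_continuousOn hf.continuousOn_graphPoint)
  have hgd : ∀ a ∈ Ioo (-1 : ℝ) 1, a ∉ C.exceptional f τ → HasDerivAt g 0 a := by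
    intro a ha hae
    have h1 : DifferentiableAt ℝ f a := by
      by_contra h
      exact hae ⟨ha, Or.inl h⟩
    have h2 := (hf.hasDerivAt_comp_graphPoint hdim hτ hz hz' hc' h hmono ha hae).sub
      (A.hasFDerivAt.comp_hasDerivAt a (C.hasDerivAt_graphPoint h1.hasDerivAt))
    rw [hA, LinearMap.coe_toContinuousLinearMap', sub_self] at h2
    exact h2
  have hconst : ∀ a ∈ Ioo (-1 : ℝ) 1, ∀ b ∈ Ioo (-1 : ℝ) 1, a ≤ b → g b = g a := by
    intro a ha b hb hab
    have hsub : Icc a b ⊆ Ioo (-1) 1 := Icc_subset_Ioo ha.1 hb.2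
    have h1 := MeasureTheory.integral_eq_of_hasDerivAt_off_countable_of_le g (fun _ => 0) hab
      (hf.countable_exceptional hdim hτ) (hgc.mono hsub)
      (fun x hx => hgd x (hsub (Ioo_subset_Icc_self hx.1)) hx.2)
      (by simp)
    rw [intervalIntegral.integral_zero] at h1
    exact (sub_eq_zero.1 h1.symm)
  have h0 : (0 : ℝ) ∈ Ioo (-1 : ℝ) 1 := by norm_num
  have hU : ∀ a ∈ Ioo (-1 : ℝ) 1,
      τ (C.graphPoint f a) = C.transfer C' (C.graphPoint f a) + g 0 := by
    intro a ha
    have h1 : g a = g 0 := by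
      rcases le_total a 0 with h | h
      · exact (hconst a ha 0 h0 h).symm
      · exact hconst 0 h0 a ha h
    rw [← h1]
    exact (add_sub_cancel _ _).symm
  refine ⟨g 0, fun x hx hxa => ?_⟩
  rcases hf.eq_or_eq hz hx hxa with h1 | h1
  · change x = C.graphPoint f (C.fst x) at h1
    rw [h1]
    exact hU _ hxa
  · change x = C.graphPoint f (C.fst x) - chord f (C.fst x) • z at h1
    set a := C.fst x
    rw [h1, h a hxa, hU a hxa, map_sub, map_smul, C.transfer_self]
    abel

theorem eq_add_of_forall_lt (hdimX : Module.finrank ℝ X = 2) (hdim : Module.finrank ℝ Y = 2)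
    (hτ : IsSphereIsometry τ) {A : X →ₗ[ℝ] Y} {k : Y}
    (h : ∀ x, ‖x‖ = 1 → C.fst x ∈ Ioo (-1 : ℝ) 1 → τ x = A x + k) {p w : X} (hp : ‖p‖ = 1)
    (hw : C.fst w = 0) (hlast : ∀ t : ℝ, 0 < t → 1 < ‖p + t • w‖) : τ p = A p + k := by
  have : FiniteDimensional ℝ X := Module.finite_of_finrank_eq_succ hdimX
  have : FiniteDimensional ℝ Y := Module.finite_of_finrank_eq_succ hdim
  have hA : Continuous A := A.continuous_of_finiteDimensional
  set x : ℝ → X := fun t => ‖p + t • w‖⁻¹ • (p + t • w) with hx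
  have hlim : Tendsto x (𝓝[>] 0) (𝓝 p) := by
    have h1 : ContinuousAt x 0 := by
      refine ContinuousAt.smul (ContinuousAt.inv₀ (by fun_prop) ?_) (by fun_prop)
      simp [hp]
    have h2 := h1.tendsto
    simp only [hx, zero_smul, add_zero, hp, inv_one, one_smul] at h2
    exact h2.mono_left nhdsWithin_le_nhds
  have hnorm : ∀ t : ℝ, 0 < t → ‖x t‖ = 1 := by
    intro t ht
    have := hlast t ht
    rw [hx, norm_smul, norm_inv, norm_norm, inv_mul_cancel₀ (by linarith)]
  have hfst : ∀ t : ℝ, 0 < t → C.fst (x t) ∈ Ioo (-1 : ℝ) 1 := by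
    intro t ht
    have h1 := hlast t ht
    have h2 := C.abs_fst_le p
    rw [mem_Ioo, ← abs_lt]
    simp only [hx, map_smul, map_add, hw, smul_eq_mul, mul_zero, add_zero, abs_mul, abs_inv,
      abs_norm]
    rw [← div_eq_inv_mul, div_lt_one (by linarith)]
    linarith
  have h1 : Tendsto (fun t => τ (x t)) (𝓝[>] 0) (𝓝 (τ p)) := by
    refine (hτ.continuousOn p (mem_sphere_zero_iff_norm.2 hp)).tendsto.comp
      (tendsto_nhdsWithin_iff.2 ⟨hlim, ?_⟩)
    filter_upwards [self_mem_nhdsWithin] with t ht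
    exact mem_sphere_zero_iff_norm.2 (hnorm t ht)
  refine tendsto_nhds_unique h1 ((((hA.tendsto p).comp hlim).add_const k).congr' ?_)
  filter_upwards [self_mem_nhdsWithin] with t ht
  exact (h _ (hnorm t ht) (hfst t ht)).symm

theorem eq_add_of_norm_eq_one (hdimX : Module.finrank ℝ X = 2) (hdim : Module.finrank ℝ Y = 2)
    (hτ : IsSphereIsometry τ) (hz : ‖z‖ = 1) (hz' : ‖z'‖ = 1) (hc' : IsNormCorner z')
    {A : X →ₗ[ℝ] Y} {k : Y} (hA : A z = z')
    (h : ∀ x, ‖x‖ = 1 → C.fst x ∈ Ioo (-1 : ℝ) 1 → τ x = A x + k) {m : X} (hm : ‖m‖ = 1) :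
    τ m = A m + k := by
  obtain ⟨C'⟩ := exists_cornerCoords hdim (z := z')
    (norm_ne_zero_iff.1 (by rw [hz']; exact one_ne_zero))
  have hend : ∀ w : X, ‖w‖ = 1 → C.fst w = 0 →
      ∃ s : ℝ, 0 ≤ s ∧ ‖m + s • w‖ = 1 ∧ τ (m + s • w) = A (m + s • w) + k := by
    intro w hw hw0
    obtain ⟨s, hs, hs1, hlast⟩ := exists_last_norm_le_one hw hm.le
    refine ⟨s, hs, hs1, eq_add_of_forall_lt hdimX hdim hτ h hs1 hw0 fun t ht => ?_⟩
    rw [add_assoc, ← add_smul]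
    exact hlast _ (by linarith)
  obtain ⟨s, hs, hp, hτp⟩ := hend z hz C.fst_z
  obtain ⟨r, hr, hq, hτq⟩ := hend (-z) (by rw [norm_neg, hz]) (by rw [map_neg, C.fst_z, neg_zero])
  rw [map_add, map_smul, hA] at hτp
  rw [map_add, map_smul, map_neg, hA] at hτq
  have h1 : ‖τ (m + s • z) - τ m‖ = s := by
    rw [hτ.norm_sub _ _ hp hm, add_sub_cancel_left, norm_smul, hz, mul_one, Real.norm_of_nonneg hs]
  have h2 : ‖(s + r) • z' - (τ (m + s • z) - τ m)‖ = r := by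
    have h3 : (s + r) • z' - (τ (m + s • z) - τ m) = τ m - τ (m + r • -z) := by
      rw [hτp, hτq]; module
    rw [h3, hτ.norm_sub _ _ hm hq, sub_add_cancel_left, norm_neg, norm_smul, norm_neg, hz, mul_one,
      Real.norm_of_nonneg hr]
  have h4 := C'.eq_smul_of_norm_le hc' hz' h1.le (h2.trans (add_sub_cancel_left s r).symm).le
  rw [← sub_sub_cancel (τ (m + s • z)) (τ m), h4, hτp]
  module

end CornerCoords

/-- An isometry of spheres which is affine is linear. -/
theorem IsSphereIsometry.exists_linearIsometryEquiv [FiniteDimensional ℝ X]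
    [FiniteDimensional ℝ Y] (hdim : Module.finrank ℝ X = Module.finrank ℝ Y)
    (hτ : IsSphereIsometry τ) {A : X →ₗ[ℝ] Y} {k : Y} (h : ∀ x, ‖x‖ = 1 → τ x = A x + k) :
    ∃ T : X ≃ₗᵢ[ℝ] Y, ∀ u : X, ‖u‖ = 1 → T u = τ u := by
  have h1 : ∀ w : Y, ‖w‖ = 1 → ‖w - (2 : ℝ) • k‖ = 1 := by
    intro w hw
    obtain ⟨x, hx, rfl⟩ := hτ.surj w hw
    have hx' : ‖-x‖ = 1 := by rw [norm_neg, hx]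
    rw [← hτ.norm_map _ hx', h _ hx, h _ hx', map_neg, ← norm_neg]
    congr 1
    module
  have hk : k = 0 := by
    by_contra hk
    have hk' := norm_pos_iff.2 hk
    have h2 := h1 (-(‖k‖⁻¹ • k)) (by
      rw [norm_neg, norm_smul, norm_inv, norm_norm, inv_mul_cancel₀ hk'.ne'])
    rw [show -(‖k‖⁻¹ • k) - (2 : ℝ) • k = (-(‖k‖⁻¹ + 2)) • k by module, norm_smul, norm_neg,
      Real.norm_of_nonneg (by positivity), add_mul, inv_mul_cancel₀ hk'.ne'] at h2
    linarith
  subst hk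
  have hA : ∀ x, ‖A x‖ = ‖x‖ := by
    intro x
    rcases eq_or_ne x 0 with rfl | hx
    · simp
    have hx' := norm_pos_iff.2 hx
    have h2 : ‖‖x‖⁻¹ • x‖ = 1 := by
      rw [norm_smul, norm_inv, norm_norm, inv_mul_cancel₀ hx'.ne']
    have h3 := hτ.norm_map _ h2
    rw [h _ h2, add_zero, map_smul, norm_smul, norm_inv, norm_norm,
      inv_mul_eq_one₀ hx'.ne'] at h3
    exact h3.symm
  refine ⟨LinearIsometry.toLinearIsometryEquiv ⟨A, hA⟩ hdim, fun u hu => ?_⟩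
  rw [h u hu, add_zero]
  rfl

end Transfer

/-- Theorem `ElT`, the main Tingley-type theorem. Let `X`, `Y` be
two-dimensional real normed spaces and `τ : S_X → S_Y` a surjective isometry. If the
set of points of the unit sphere of `X` where the norm fails to be differentiable is
finite and has more than three elements, then `τ` is (the restriction of) a surjective
linear isometry. -/
theorem stmt9 {X Y : Type*} [NormedAddCommGroup X] [NormedSpace ℝ X]
    [NormedAddCommGroup Y] [NormedSpace ℝ Y]
    (hdimX : Module.finrank ℝ X = 2) (hdimY : Module.finrank ℝ Y = 2)
    (hfin : {u : X | ‖u‖ = 1 ∧ ¬ DifferentiableAt ℝ (fun z : X => ‖z‖) u}.Finite)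
    (hcard : 3 < {u : X | ‖u‖ = 1 ∧ ¬ DifferentiableAt ℝ (fun z : X => ‖z‖) u}.ncard)
    (τ : X → Y)
    (hmap : ∀ u : X, ‖u‖ = 1 → ‖τ u‖ = 1)
    (hsurj : ∀ w : Y, ‖w‖ = 1 → ∃ u : X, ‖u‖ = 1 ∧ τ u = w)
    (hiso : ∀ u v : X, ‖u‖ = 1 → ‖v‖ = 1 → ‖τ u - τ v‖ = ‖u - v‖) :
    ∃ T : X ≃ₗᵢ[ℝ] Y, ∀ u : X, ‖u‖ = 1 → T u = τ u := by
  have : FiniteDimensional ℝ X := Module.finite_of_finrank_eq_succ hdimX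
  have : FiniteDimensional ℝ Y := Module.finite_of_finrank_eq_succ hdimY
  obtain ⟨z, hz, hnd⟩ := Set.nonempty_of_ncard_ne_zero (ne_zero_of_lt hcard)
  have hc : IsNormCorner z := by
    by_contra h
    refine hnd (differentiableAt_norm_of_normDirDeriv fun v => ?_)
    by_contra hv
    exact h ⟨v, hv⟩
  have hτ : IsSphereIsometry τ := ⟨hmap, hsurj, hiso⟩
  obtain ⟨C⟩ := exists_cornerCoords hdimX (norm_ne_zero_iff.1 (by rw [hz]; exact one_ne_zero))
  obtain ⟨f, hf⟩ := C.exists_isHeight hz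
  obtain ⟨z', hz', hc', h⟩ := hf.exists_corner hdimY hτ hz hc
  obtain ⟨C', hmono⟩ := hf.exists_strictMonoOn_fst hdimY hτ hz hc hz' h
  obtain ⟨k, hk⟩ := hf.exists_eq_add_const hdimX hdimY hτ hz hz' hc' h hmono
  exact hτ.exists_linearIsometryEquiv (hdimX.trans hdimY.symm) fun x hx =>
    CornerCoords.eq_add_of_norm_eq_one hdimX hdimY hτ hz hz' hc' (C.transfer_self C') hk hx
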